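/- Suppose n > (2γ + m(m−1))(R+1). Then the singular series factors as a product of local densities: 𝔖(b) = ∏_p α_p(A,B), the product running over all primes p. -/

import Mathlib

open scoped BigOperators
open MeasureTheory Matrix Filter

noncomputable section

/-- Index type for pairs `(i,j)` with `i ≤ j` (the `R = m(m+1)/2` upper-triangular positions). -/
abbrev Idx (m : ℕ) : Type := {p : Fin m × Fin m // p.1 ≤ p.2}

instance idxNonempty (m : ℕ) [NeZero m] : Nonempty (Idx m) :=
  ⟨⟨(0, 0), le_rfl⟩⟩

/-- `e(z) = exp(2πiz)` -/
def eR (z : ℝ) : ℂ := Complex.exp (2 * Real.pi * Complex.I * z)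

/-- `xᵢᵀ A xⱼ` for integer vectors. -/
def quadZ {m n : ℕ} (A : Matrix (Fin n) (Fin n) ℤ) (x : Fin m → Fin n → ℤ)
    (i j : Fin m) : ℤ :=
  ∑ s, ∑ t, x i s * A s t * x j t

/-- `vᵢᵀ A vⱼ` for real vectors. -/
def quadR {m n : ℕ} (A : Matrix (Fin n) (Fin n) ℤ) (v : Fin m → Fin n → ℝ)
    (i j : Fin m) : ℝ :=
  ∑ s, ∑ t, v i s * (A s t : ℝ) * v j t

/-- The tuple `b = (B_{ij})_{1 ≤ i ≤ j ≤ m}`. -/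
def bvec {m : ℕ} (B : Matrix (Fin m) (Fin m) ℤ) (p : Idx m) : ℤ := B p.1.1 p.1.2

/-- `γ_i`, defined by `B₁₁ = B_{ii}^{γ_i}`, i.e. `γ_i = log B₁₁ / log B_{ii}`. -/
def gamI {m : ℕ} [NeZero m] (B : Matrix (Fin m) (Fin m) ℤ) (i : Fin m) : ℝ :=
  Real.log ((B 0 0 : ℤ) : ℝ) / Real.log ((B i i : ℤ) : ℝ)

/-- `γ = Σ 1/γ_i`. -/
def gamT {m : ℕ} [NeZero m] (B : Matrix (Fin m) (Fin m) ℤ) : ℝ :=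
  ∑ i, (gamI B i)⁻¹

/-- `P_i = C^{1/γ_i} B_{ii}^{1/2}`. -/
def PP {m : ℕ} [NeZero m] (C : ℝ) (B : Matrix (Fin m) (Fin m) ℤ) (i : Fin m) : ℝ :=
  C ^ (gamI B i)⁻¹ * ((B i i : ℤ) : ℝ) ^ ((1 : ℝ) / 2)

/-- `Π = ∏ P_i`. -/
def PiP {m : ℕ} [NeZero m] (C : ℝ) (B : Matrix (Fin m) (Fin m) ℤ) : ℝ :=
  ∏ i, PP C B i

/-- The box of integer tuples `(x₁,…,x_m)` with `|x_i| ≤ P_i` (max-norm). -/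
def box (m n : ℕ) [NeZero m] (C : ℝ) (B : Matrix (Fin m) (Fin m) ℤ) :
    Finset (Fin m → Fin n → ℤ) :=
  Finset.Icc (fun i _ => -⌊PP C B i⌋) (fun i _ => ⌊PP C B i⌋)

/-- The exponential sum `S(α, b)`. -/
def Ssum {m n : ℕ} [NeZero m] (A : Matrix (Fin n) (Fin n) ℤ) (C : ℝ)
    (B : Matrix (Fin m) (Fin m) ℤ) (α : Idx m → ℝ) (b : Idx m → ℤ) : ℂ :=
  ∑ x ∈ box m n C B,
    eR (∑ p : Idx m, α p * ((quadZ A x p.1.1 p.1.2 - b p : ℤ) : ℝ))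

/-- The complete exponential sum `S_{a,q}(b)`. -/
def Saq {m n : ℕ} (A : Matrix (Fin n) (Fin n) ℤ) (q : ℤ) (a b : Idx m → ℤ) : ℂ :=
  ∑ z ∈ (Finset.Icc (fun _ _ => 0) (fun _ _ => q - 1) : Finset (Fin m → Fin n → ℤ)),
    eR ((∑ p : Idx m, (a p : ℝ) * ((quadZ A z p.1.1 p.1.2 - b p : ℤ) : ℝ)) / (q : ℝ))

/-- Residue tuples `a (mod q)` with `gcd(q, a) = 1`. -/
def resid (m : ℕ) (q : ℤ) : Finset (Idx m → ℤ) :=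
  (Finset.Icc (fun _ => 0) (fun _ => q - 1)).filter fun a =>
    Int.gcd q (Finset.univ.gcd a) = 1

/-- The `q`-th term of the singular series. -/
def STerm {m n : ℕ} (A : Matrix (Fin n) (Fin n) ℤ) (B : Matrix (Fin m) (Fin m) ℤ)
    (q : ℕ) : ℂ :=
  ((q : ℂ) ^ (m * n))⁻¹ * ∑ a ∈ resid m (q : ℤ), Saq A (q : ℤ) a (bvec B)

/-- The truncated singular series `𝔖(Q; b)`. -/
def SingT {m n : ℕ} (A : Matrix (Fin n) (Fin n) ℤ) (B : Matrix (Fin m) (Fin m) ℤ)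
    (Q : ℝ) : ℂ :=
  ∑ q ∈ Finset.Icc 1 ⌊Q⌋₊, STerm A B q

/-- The singular series `𝔖(b) = Σ_{q=1}^∞ q^{-mn} Σ_{a mod q, (a,q)=1} S_{a,q}(b)`. -/
def Sing {m n : ℕ} (A : Matrix (Fin n) (Fin n) ℤ) (B : Matrix (Fin m) (Fin m) ℤ) : ℂ :=
  ∑' q : ℕ, STerm A B q

/-- The oscillatory integral `I` with weights `w_p`;
`I(P,β)` is obtained with `w_p = P_iP_jβ_{ij}` and `I(η)` with `w = η`. -/
def Iint {m n : ℕ} (A : Matrix (Fin n) (Fin n) ℤ) (w : Idx m → ℝ) : ℂ :=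
  ∫ v in (Set.univ.pi fun _ : Fin m => Set.univ.pi fun _ : Fin n => Set.Icc (-1 : ℝ) 1),
    eR (∑ p : Idx m, w p * quadR A v p.1.1 p.1.2)

/-- The truncated singular integral `𝔍(Q; c)`. -/
def JintT {m n : ℕ} (A : Matrix (Fin n) (Fin n) ℤ) (Q : ℝ) (c : Idx m → ℝ) : ℂ :=
  ∫ η in (Set.univ.pi fun _ : Idx m => Set.Icc (-Q) Q),
    Iint (n := n) A η * eR (-(∑ p : Idx m, η p * c p))

/-- The singular integral `𝔍(c)`. -/
def Jint {m n : ℕ} (A : Matrix (Fin n) (Fin n) ℤ) (c : Idx m → ℝ) : ℂ :=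
  ∫ η : Idx m → ℝ, Iint (n := n) A η * eR (-(∑ p : Idx m, η p * c p))

/-- The major arc `M_{a,q}(Δ)` (with constant `c₀`). -/
def MArc {m : ℕ} [NeZero m] (C : ℝ) (B : Matrix (Fin m) (Fin m) ℤ) (c₀ Δ : ℝ)
    (q : ℤ) (a : Idx m → ℤ) : Set (Idx m → ℝ) :=
  {α | (∀ p, 0 ≤ α p ∧ α p < 1) ∧
    ∀ p : Idx m, |(q : ℝ) * α p - (a p : ℝ)| ≤
      c₀ * PiP C B ^ Δ * (PP C B p.1.1 * PP C B p.1.2)⁻¹}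

/-- The enlarged major arc `M'_{a,q}(Δ)` (with constant `c₀`). -/
def MArc' {m : ℕ} [NeZero m] (C : ℝ) (B : Matrix (Fin m) (Fin m) ℤ) (c₀ Δ : ℝ)
    (q : ℤ) (a : Idx m → ℤ) : Set (Idx m → ℝ) :=
  {α | (∀ p, 0 ≤ α p ∧ α p < 1) ∧
    ∀ p : Idx m, |(q : ℝ) * α p - (a p : ℝ)| ≤
      c₀ * (q : ℝ) * PiP C B ^ Δ * (PP C B p.1.1 * PP C B p.1.2)⁻¹}

/-- Admissible pairs `(q, a)`: `1 ≤ q ≤ c₀Π^Δ`, `0 ≤ a_{ij} < q`, `gcd(q,a) = 1`. -/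
def validAQ {m : ℕ} [NeZero m] (C : ℝ) (B : Matrix (Fin m) (Fin m) ℤ) (c₀ Δ : ℝ)
    (q : ℤ) (a : Idx m → ℤ) : Prop :=
  1 ≤ q ∧ (q : ℝ) ≤ c₀ * PiP C B ^ Δ ∧ (∀ p, 0 ≤ a p ∧ a p < q) ∧
    Int.gcd q (Finset.univ.gcd a) = 1

/-- The major arcs `M(Δ)`. -/
def MSet {m : ℕ} [NeZero m] (C : ℝ) (B : Matrix (Fin m) (Fin m) ℤ) (c₀ Δ : ℝ) :
    Set (Idx m → ℝ) :=
  ⋃ q : ℤ, ⋃ a : Idx m → ℤ, ⋃ _ : validAQ C B c₀ Δ q a, MArc C B c₀ Δ q a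

/-- `N(A,B)`: the number of integral representations of `B` by `A`. -/
def NAB (m n : ℕ) (A : Matrix (Fin n) (Fin n) ℤ) (B : Matrix (Fin m) (Fin m) ℤ) : ℕ :=
  Nat.card {X : Matrix (Fin n) (Fin m) ℤ | Xᵀ * A * X = B}

/-- `#{X mod q : XᵀAX ≡ B (mod q)}`. -/
def locCount (m n : ℕ) (A : Matrix (Fin n) (Fin n) ℤ) (B : Matrix (Fin m) (Fin m) ℤ)
    (q : ℕ) : ℕ :=
  Nat.card {X : Matrix (Fin n) (Fin m) (ZMod q) |
    Xᵀ * A.map ((↑) : ℤ → ZMod q) * X = B.map ((↑) : ℤ → ZMod q)}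

/-- The archimedean density `α_∞(A,B)`. -/
def alphaInf (m n : ℕ) (A : Matrix (Fin n) (Fin n) ℤ)
    (B : Matrix (Fin m) (Fin m) ℤ) : ℝ :=
  ((A.det : ℤ) : ℝ) ^ (-(m : ℝ) / 2) * ((B.det : ℤ) : ℝ) ^ (((n : ℝ) - m - 1) / 2) *
    Real.pi ^ ((m : ℝ) * (2 * (n : ℝ) - m + 1) / 4) *
    ∏ j ∈ Finset.Ioc (n - m) n, (Real.Gamma ((j : ℝ) / 2))⁻¹

/-- `max_{1≤i≤j≤m} |η_{ij}|`. -/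
def maxAbs {m : ℕ} [NeZero m] (η : Idx m → ℝ) : ℝ := ⨆ p : Idx m, |η p|

/-!
The proof rests on two properties of the terms `S(q)` of the singular series.

*Absolute convergence.* Weyl differencing bounds `|S_{a,q}(b)|²` by `q^{mn}` times the number of
matrices `H` modulo `q` with `A H (T + Tᵀ) = 0`, where `T` is the upper triangular matrix of the
frequencies `a`. Multiplying by the adjugate of `A` replaces this by `v (det A • (T + Tᵀ)) = 0` for
each row `v` of `H`, which leaves at most `gcd(q, 2 det A) q^{m-1}` choices per row when
`gcd(a, q) = 1`. Hence `S(q) = O(q^{R - n/2})`, and `n > 2R + 2` makes the series converge.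

*Multiplicativity.* Sorting all `a` modulo `q` by `gcd(a, q)` and using orthogonality of additive
characters, the sum of `S(d)` over the divisors `d` of `q` is `q^{R - mn}` times the number of
solutions of `XᵀAX ≡ B` modulo `q`. That quantity is multiplicative by the Chinese remainder
theorem, hence so is `S` by Möbius inversion, and its partial sums over powers of `p` are the
quantities that stabilize to `α_p`. The Euler product follows.
-/

section FiniteSums

theorem bijOn_comp_piFinset {ι α β : Type*} [Fintype ι] [DecidableEq ι] {f : α → β}
    {s : Finset α} (h : Set.BijOn f s Set.univ) :
    Set.BijOn (fun a : ι → α => f ∘ a) (Fintype.piFinset fun _ => s : Finset (ι → α))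
      Set.univ := by
  simp only [Fintype.coe_piFinset]
  refine ⟨Set.mapsTo_univ _ _, fun a ha a' ha' haa' => funext fun i => ?_, fun b _ => ?_⟩
  · exact h.injOn (ha i trivial) (ha' i trivial) (congrFun haa' i)
  · choose a ha hab using fun i => h.surjOn (Set.mem_univ (b i))
    exact ⟨a, fun i _ => ha i, funext hab⟩

theorem sum_comp_of_bijOn_univ {α β M : Type*} [Fintype β] [AddCommMonoid M] {f : α → β}
    {s : Finset α} (h : Set.BijOn f s Set.univ) (F : β → M) :
    ∑ a ∈ s, F (f a) = ∑ b, F b :=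
  Finset.sum_nbij f (fun _ _ => Finset.mem_univ _) h.injOn
    (by rw [Finset.coe_univ]; exact h.surjOn) fun _ _ => rfl

theorem bijOn_intCast_Icc (q : ℕ) [NeZero q] :
    Set.BijOn ((↑) : ℤ → ZMod q) (Finset.Icc 0 ((q : ℤ) - 1)) Set.univ := by
  refine ⟨Set.mapsTo_univ _ _, fun a ha a' ha' haa' => ?_, fun b _ => ?_⟩
  · rw [Finset.mem_coe, Finset.mem_Icc] at ha ha'
    have hmod : a % q = a' % q := (ZMod.intCast_eq_intCast_iff' a a' q).1 haa'
    rwa [Int.emod_eq_of_lt ha.1 (by lia), Int.emod_eq_of_lt ha'.1 (by lia)] at hmod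
  · have hb : b.val < q := ZMod.val_lt b
    exact ⟨b.val, by rw [Finset.mem_coe, Finset.mem_Icc]; lia, by simp⟩

theorem sum_Icc_comp_intCast {ι M : Type*} [Fintype ι] [DecidableEq ι] [AddCommMonoid M]
    (q : ℕ) [NeZero q] (F : (ι → ZMod q) → M) :
    ∑ a ∈ Finset.Icc (fun _ : ι => (0 : ℤ)) (fun _ => (q : ℤ) - 1), F (fun i => a i) =
      ∑ a, F a := by
  rw [Pi.Icc_eq]
  exact sum_comp_of_bijOn_univ (bijOn_comp_piFinset (bijOn_intCast_Icc q)) F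

theorem sum_Icc_comp_intCast_matrix {ι κ M : Type*} [Fintype ι] [DecidableEq ι] [Fintype κ]
    [DecidableEq κ] [AddCommMonoid M] (q : ℕ) [NeZero q] (F : Matrix κ ι (ZMod q) → M) :
    ∑ z ∈ Finset.Icc (fun (_ : ι) (_ : κ) => (0 : ℤ)) (fun _ _ => (q : ℤ) - 1),
      F (Matrix.of fun s i => (z i s : ZMod q)) = ∑ X, F X := by
  rw [Pi.Icc_eq, Pi.Icc_eq,
    ← Fintype.sum_equiv ((Equiv.piComm _).trans Matrix.of)
      (fun Z : ι → κ → ZMod q => F (Matrix.of fun s i => Z i s)) F fun _ => rfl]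
  exact sum_comp_of_bijOn_univ (bijOn_comp_piFinset (bijOn_comp_piFinset (bijOn_intCast_Icc q)))
    fun Z => F (Matrix.of fun s i => Z i s)

theorem sum_comp_eq_card_ker_nsmul {G H M : Type*} [AddGroup G] [Fintype G] [AddGroup H]
    [Fintype H] [AddCommMonoid M] (f : G →+ H) (hf : Function.Surjective f) (F : H → M) :
    ∑ x, F (f x) = Nat.card f.ker • ∑ y, F y := by
  classical
  have hfiber (y : H) : Finset.card {x | f x = y} = Nat.card f.ker := by
    rw [AddMonoidHom.card_fiber_eq_of_mem_range f (hf y) (hf 0), ← Fintype.card_subtype]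
    exact Fintype.card_eq_nat_card
  simp_rw [← Finset.sum_fiberwise' _ f F, Finset.sum_const, hfiber, Finset.smul_sum]

theorem int_gcd_mul_gcd_mul {ι : Type*} (s : Finset ι) (g d : ℕ) (a : ι → ℤ) :
    Int.gcd ((g : ℤ) * d) (s.gcd fun i => (g : ℤ) * a i) = g * Int.gcd d (s.gcd a) := by
  rw [Finset.gcd_mul_left, Int.normalize_of_nonneg (by positivity), Int.gcd_mul_left,
    Int.natAbs_natCast]

variable {ι M : Type*} [Fintype ι] [DecidableEq ι] [AddCommMonoid M]

theorem sum_Icc_filter_gcd_eq {g d : ℕ} (hg : g ≠ 0) (F : (ι → ℤ) → M) :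
    ∑ a ∈ Finset.Icc (fun _ => 0) (fun _ => (g : ℤ) * d - 1) with
        Int.gcd ((g : ℤ) * d) (Finset.univ.gcd a) = g, F a =
      ∑ a ∈ Finset.Icc (fun _ => 0) (fun _ => (d : ℤ) - 1) with
        Int.gcd d (Finset.univ.gcd a) = 1, F (fun i => (g : ℤ) * a i) := by
  have hg' : (0 : ℤ) < g := by lia
  have hmem (a : ι → ℤ) : (fun i => (g : ℤ) * a i) ∈
      ({a ∈ Finset.Icc (fun _ => 0) (fun _ => (g : ℤ) * d - 1) |
        Int.gcd ((g : ℤ) * d) (Finset.univ.gcd a) = g} : Finset (ι → ℤ)) ↔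
      a ∈ ({a ∈ Finset.Icc (fun _ => 0) (fun _ => (d : ℤ) - 1) |
        Int.gcd d (Finset.univ.gcd a) = 1} : Finset (ι → ℤ)) := by
    simp only [Finset.mem_filter, Finset.mem_Icc, Pi.le_def, int_gcd_mul_gcd_mul,
      Int.le_sub_one_iff, mul_nonneg_iff_of_pos_left hg', mul_lt_mul_iff_right₀ hg',
      Nat.mul_eq_left hg]
  symm
  refine Finset.sum_nbij (fun a i => (g : ℤ) * a i) (fun a => (hmem a).2) ?_ (fun a ha => ?_)
    fun _ _ => rfl
  · exact fun a _ a' _ h => funext fun i => mul_left_cancel₀ hg'.ne' (congrFun h i)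
  · have hdvd (i : ι) : (g : ℤ) ∣ a i := by
      rw [← (Finset.mem_filter.1 ha).2]
      exact (Int.gcd_dvd_right _ _).trans (Finset.gcd_dvd (Finset.mem_univ i))
    choose a' ha' using hdvd
    obtain rfl : a = fun i => (g : ℤ) * a' i := funext ha'
    exact ⟨a', (hmem a').1 ha, rfl⟩

theorem sum_Icc_eq_sum_divisors {q : ℕ} (hq : q ≠ 0) (F : (ι → ℤ) → M) :
    ∑ a ∈ Finset.Icc (fun _ => 0) (fun _ => (q : ℤ) - 1), F a =
      ∑ d ∈ q.divisors, ∑ a ∈ Finset.Icc (fun _ => 0) (fun _ => (d : ℤ) - 1) with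
        Int.gcd d (Finset.univ.gcd a) = 1, F (fun i => (q / d : ℕ) * a i) := by
  rw [← Finset.sum_fiberwise_of_maps_to (g := fun a => Int.gcd q (Finset.univ.gcd a))
    (t := q.divisors) fun a _ =>
      Nat.mem_divisors.2 ⟨Int.natCast_dvd_natCast.1 (Int.gcd_dvd_left _ _), hq⟩,
    ← Nat.sum_div_divisors]
  refine Finset.sum_congr rfl fun d hd => ?_
  have hqd : q / d * d = q := Nat.div_mul_cancel (Nat.dvd_of_mem_divisors hd)
  have hg : q / d ≠ 0 := left_ne_zero_of_mul (hqd.trans_ne hq)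
  simpa only [← Nat.cast_mul, hqd] using sum_Icc_filter_gcd_eq (d := d) hg F

end FiniteSums

section AdditiveCharacters

theorem sum_addChar_comp_linearMap {R R' M : Type*} [CommRing R] [CommRing R'] [IsDomain R']
    [AddCommGroup M] [Module R M] [Fintype M] {ψ : AddChar R R'} (hψ : ψ.IsPrimitive)
    (f : M →ₗ[R] R) [Decidable (f = 0)] :
    ∑ x, ψ (f x) = if f = 0 then (Fintype.card M : R') else 0 := by
  have hf : ψ.compAddMonoidHom f.toAddMonoidHom = 0 ↔ f = 0 := by
    refine ⟨fun h => LinearMap.ext fun x => by_contra fun hx => hψ hx ?_, fun h => ?_⟩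
    · ext r
      simpa [mul_comm] using DFunLike.congr_fun h (r • x)
    · ext x
      simp [h]
  classical
  simpa [hf] using AddChar.sum_eq_ite (ψ.compAddMonoidHom f.toAddMonoidHom)

variable {ι κ R R' : Type*} [Fintype ι] [Fintype κ] [DecidableEq ι] [DecidableEq κ] [CommRing R]
  [Fintype R] [DecidableEq R] [CommRing R'] [IsDomain R'] {ψ : AddChar R R'}

theorem sum_addChar_sum_mul (hψ : ψ.IsPrimitive) (c : ι → R) :
    ∑ a : ι → R, ψ (∑ i, a i * c i) =
      if c = 0 then (Fintype.card R : R') ^ Fintype.card ι else 0 := by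
  classical
  have hc : Fintype.linearCombination R c = 0 ↔ c = 0 := by
    refine ⟨fun h => funext fun i => ?_, fun h => by ext; simp [h]⟩
    simpa using DFunLike.congr_fun h (Pi.single i 1)
  simpa [hc, Fintype.linearCombination_apply] using
    sum_addChar_comp_linearMap hψ (Fintype.linearCombination R c)

theorem sum_addChar_trace_transpose_mul (hψ : ψ.IsPrimitive) (Y : Matrix κ ι R) :
    ∑ X : Matrix κ ι R, ψ (Xᵀ * Y).trace =
      if Y = 0 then (Fintype.card (Matrix κ ι R) : R') else 0 := by
  classical
  let f : Matrix κ ι R →ₗ[R] R := Matrix.traceLinearMap ι R R ∘ₗ mulRightLinearMap ι R Y ∘ₗ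
    (Matrix.transposeLinearEquiv κ ι R R).toLinearMap
  have hf : f = 0 ↔ Y = 0 := by
    refine ⟨fun h => Matrix.ext_iff_trace_mul_left.2 fun W => ?_, fun h => by ext; simp [f, h]⟩
    simpa [f] using DFunLike.congr_fun h Wᵀ
  simpa [f, hf] using sum_addChar_comp_linearMap hψ f

end AdditiveCharacters

section UpperTriangular

variable {m : ℕ} {R : Type*}

/-- The upper triangular matrix whose entries on and above the diagonal are the tuple `a`; it turns
the index set `Idx m` of the frequencies into matrix algebra. -/
def upperMat [Zero R] (a : Idx m → R) : Matrix (Fin m) (Fin m) R :=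
  Matrix.of fun i j => if h : i ≤ j then a ⟨(i, j), h⟩ else 0

theorem upperMat_map {S : Type*} [Zero R] [Zero S] (a : Idx m → R) {f : R → S} (hf : f 0 = 0) :
    (upperMat a).map f = upperMat fun p => f (a p) := by
  ext i j
  by_cases h : i ≤ j <;> simp [upperMat, h, hf]

theorem sum_mul_eq_trace_upperMat [NonUnitalNonAssocSemiring R] (a : Idx m → R)
    (Y : Matrix (Fin m) (Fin m) R) :
    ∑ p : Idx m, a p * Y p.1.1 p.1.2 = ((upperMat a)ᵀ * Y).trace := by
  have hlower (p : Fin m × Fin m) (hp : ¬p.1 ≤ p.2) : upperMat a p.1 p.2 * Y p.1 p.2 = 0 := by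
    simp [upperMat, hp]
  calc ∑ p : Idx m, a p * Y p.1.1 p.1.2
      = ∑ p : Idx m, upperMat a p.1.1 p.1.2 * Y p.1.1 p.1.2 :=
        Fintype.sum_congr _ _ fun p => by rw [upperMat, Matrix.of_apply, dif_pos p.2]
    _ = ∑ p : Fin m × Fin m, upperMat a p.1 p.2 * Y p.1 p.2 := by
        rw [← Fintype.sum_subtype_add_sum_subtype fun p : Fin m × Fin m => p.1 ≤ p.2,
          Fintype.sum_eq_zero (fun p : {p : Fin m × Fin m // ¬p.1 ≤ p.2} => _)
            fun p => hlower p.1 p.2, add_zero]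
    _ = ((upperMat a)ᵀ * Y).trace := by
        rw [Fintype.sum_prod_type, Finset.sum_comm]
        simp only [Matrix.trace, Matrix.diag, Matrix.mul_apply, Matrix.transpose_apply]

theorem upperMat_add_transpose_apply_dvd [CommSemiring R] (a : Idx m → R) (p : Idx m) :
    (upperMat a + (upperMat a)ᵀ) p.1.1 p.1.2 ∣ 2 * a p := by
  obtain ⟨⟨i, j⟩, hij⟩ := p
  obtain hlt | rfl := lt_or_eq_of_le (show i ≤ j from hij)
  · simp [upperMat, hlt.le, hlt.not_ge]
  · simp [upperMat, two_mul]

theorem eq_of_isSymm_of_forall_idx {X Y : Matrix (Fin m) (Fin m) R} (hX : X.IsSymm)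
    (hY : Y.IsSymm) (h : ∀ p : Idx m, X p.1.1 p.1.2 = Y p.1.1 p.1.2) : X = Y := by
  ext i j
  obtain hij | hji := le_total i j
  · exact h ⟨(i, j), hij⟩
  · rw [← hX.apply, ← hY.apply, h ⟨(j, i), hji⟩]

end UpperTriangular

section GaussSums

variable {ι κ R : Type*} [Fintype ι] [Fintype κ] [CommRing R]

/-- The phase `tr(Tᵀ(XᵀAX - B))` of the representation problem `XᵀAX = B`; for upper triangular
`T` with entries `a_{ij}` it is the exponent `∑_{i ≤ j} a_{ij}(z_iᵀAz_j - B_{ij})` of the paper, the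
columns of `X` being the `z_i`. -/
def repPhase (A : Matrix κ κ R) (B T : Matrix ι ι R) (X : Matrix κ ι R) : R :=
  (Tᵀ * (Xᵀ * A * X - B)).trace

theorem map_repPhase {S : Type*} [CommRing S] (f : R →+* S) (A : Matrix κ κ R)
    (B T : Matrix ι ι R) (X : Matrix κ ι R) :
    f (repPhase A B T X) = repPhase (A.map f) (B.map f) (T.map f) (X.map f) := by
  simp only [repPhase, AddMonoidHom.map_trace, Matrix.map_mul, Matrix.transpose_map,
    Matrix.map_sub f (map_sub f)]

theorem repPhase_add_sub_repPhase {A : Matrix κ κ R} (hA : A.IsSymm) (B T : Matrix ι ι R)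
    (X H : Matrix κ ι R) :
    repPhase A B T (X + H) - repPhase A B T X =
      (Tᵀ * (Hᵀ * A * H)).trace + (Xᵀ * (A * H * (T + Tᵀ))).trace := by
  have hXH : (Tᵀ * (Xᵀ * A * H)).trace = (Xᵀ * (A * H * Tᵀ)).trace := by
    rw [Matrix.trace_mul_comm]
    simp only [Matrix.mul_assoc]
  have hHX : (Tᵀ * (Hᵀ * A * X)).trace = (Xᵀ * (A * H * T)).trace := by
    rw [← Matrix.trace_transpose]
    simp only [Matrix.transpose_mul, Matrix.transpose_transpose, hA.eq, Matrix.mul_assoc]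
  simp only [repPhase, Matrix.transpose_add, Matrix.add_mul, Matrix.mul_add, Matrix.mul_sub,
    Matrix.trace_add, Matrix.trace_sub, hXH, hHX]
  ring

variable [DecidableEq ι] [DecidableEq κ] [Fintype R]

/-- The Gauss sum of the representation problem `XᵀAX = B` over a finite ring, for an additive
character `ψ`. It is `S_{a,q}(b)` for `ψ(x) = e(x/q)` on `ℤ/qℤ` and `T` upper triangular with
entries `a`. -/
def repGaussSum (ψ : AddChar R ℂ) (A : Matrix κ κ R) (B T : Matrix ι ι R) : ℂ :=
  ∑ X : Matrix κ ι R, ψ (repPhase A B T X)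

theorem sum_repGaussSum_upperMat {m : ℕ} {ψ : AddChar R ℂ} (hψ : ψ.IsPrimitive) {A : Matrix κ κ R}
    (hA : A.IsSymm) {B : Matrix (Fin m) (Fin m) R} (hB : B.IsSymm) :
    ∑ a, repGaussSum ψ A B (upperMat a) =
      (Fintype.card R : ℂ) ^ Fintype.card (Idx m) *
        Nat.card {X : Matrix κ (Fin m) R // Xᵀ * A * X = B} := by
  classical
  have hX (X : Matrix κ (Fin m) R) :
      (fun p : Idx m => (Xᵀ * A * X - B) p.1.1 p.1.2) = 0 ↔ Xᵀ * A * X = B := by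
    refine ⟨fun h => ?_, fun h => by simp [h, funext_iff]⟩
    refine eq_of_isSymm_of_forall_idx ?_ hB fun p => sub_eq_zero.1 (congrFun h p)
    simp [Matrix.IsSymm, Matrix.mul_assoc, hA.eq]
  simp_rw [repGaussSum, repPhase, ← sum_mul_eq_trace_upperMat]
  rw [Finset.sum_comm]
  simp_rw [sum_addChar_sum_mul hψ, hX]
  rw [← Finset.sum_filter, Finset.sum_const, nsmul_eq_mul, mul_comm, Nat.card_eq_fintype_card,
    Fintype.card_subtype fun X => Xᵀ * A * X = B]

theorem repGaussSum_mul_conj {A : Matrix κ κ R} (hA : A.IsSymm) (ψ : AddChar R ℂ)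
    (B T : Matrix ι ι R) :
    repGaussSum ψ A B T * starRingEnd ℂ (repGaussSum ψ A B T) =
      ∑ H : Matrix κ ι R, ψ (Tᵀ * (Hᵀ * A * H)).trace *
        ∑ X : Matrix κ ι R, ψ (Xᵀ * (A * H * (T + Tᵀ))).trace := by
  simp_rw [repGaussSum, map_sum, Finset.sum_mul_sum, Finset.mul_sum]
  conv_rhs => rw [Finset.sum_comm]
  rw [Finset.sum_comm]
  refine Finset.sum_congr rfl fun X _ => (Fintype.sum_equiv (Equiv.addLeft X) _ _ fun H => ?_).symm
  rw [Equiv.coe_addLeft, ← AddChar.map_neg_eq_conj, ← AddChar.map_add_eq_mul,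
    ← AddChar.map_add_eq_mul, ← sub_eq_add_neg, repPhase_add_sub_repPhase hA]

theorem norm_repGaussSum_sq_le {ψ : AddChar R ℂ} (hψ : ψ.IsPrimitive) {A : Matrix κ κ R}
    (hA : A.IsSymm) (B T : Matrix ι ι R) :
    ‖repGaussSum ψ A B T‖ ^ 2 ≤ Fintype.card (Matrix κ ι R) *
      Nat.card {H : Matrix κ ι R // A * H * (T + Tᵀ) = 0} := by
  classical
  calc ‖repGaussSum ψ A B T‖ ^ 2
      = ‖repGaussSum ψ A B T * starRingEnd ℂ (repGaussSum ψ A B T)‖ := by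
        rw [norm_mul, RCLike.norm_conj, sq]
    _ ≤ ∑ H : Matrix κ ι R, ‖∑ X : Matrix κ ι R, ψ (Xᵀ * (A * H * (T + Tᵀ))).trace‖ := by
        rw [repGaussSum_mul_conj hA]
        exact norm_sum_le_of_le _ fun H _ => by rw [norm_mul, AddChar.norm_apply, one_mul]
    _ = Fintype.card (Matrix κ ι R) * Nat.card {H : Matrix κ ι R // A * H * (T + Tᵀ) = 0} := by
        simp_rw [sum_addChar_trace_transpose_mul hψ, apply_ite norm, norm_zero,
          Complex.norm_natCast]
        rw [← Finset.sum_filter, Finset.sum_const, nsmul_eq_mul, mul_comm,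
          Nat.card_eq_fintype_card, Fintype.card_subtype]

end GaussSums

section KernelBounds

theorem card_mul_mul_eq_zero_le {ι ι' κ R : Type*} [Fintype ι] [Fintype κ] [DecidableEq κ]
    [CommRing R] [Finite R] (A : Matrix κ κ R) (M : Matrix ι ι' R) :
    Nat.card {H : Matrix κ ι R // A * H * M = 0} ≤
      Nat.card {v : ι → R // v ᵥ* (A.det • M) = 0} ^ Fintype.card κ := by
  have hrow (H : Matrix κ ι R) (hH : A * H * M = 0) (s : κ) : H s ᵥ* (A.det • M) = 0 := by
    have hadj : A.det • (H * M) = 0 := by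
      rw [← Matrix.one_mul (H * M), ← Matrix.smul_mul, ← Matrix.adjugate_mul, Matrix.mul_assoc,
        ← Matrix.mul_assoc A, hH, Matrix.mul_zero]
    rw [Matrix.vecMul_smul]
    exact congrFun hadj s
  rw [← Nat.card_eq_fintype_card, ← Nat.card_fun]
  exact Nat.card_le_card_of_injective (fun H s => ⟨H.1 s, hrow H.1 H.2 s⟩) fun H H' h =>
    Subtype.ext (Matrix.ext fun s i => congrFun (congrArg Subtype.val (congrFun h s)) i)

theorem mul_card_vecMul_eq_zero_le {ι κ : Type*} [Fintype ι] [Fintype κ] (q : ℕ) [NeZero q]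
    (M : Matrix ι κ ℤ) :
    q * Nat.card {v : ι → ZMod q // v ᵥ* M.map (↑) = 0} ≤
      Int.gcd q (Finset.univ.gcd fun p : ι × κ => M p.1 p.2) * q ^ Fintype.card ι := by
  classical
  set g := Int.gcd q (Finset.univ.gcd fun p : ι × κ => M p.1 p.2)
  let φ : (ι → ZMod q) →+ (κ → ZMod q) := (M.map ((↑) : ℤ → ZMod q)).vecMulLinear.toAddMonoidHom
  have hcard : Nat.card φ.ker * Nat.card φ.range = q ^ Fintype.card ι := by
    rw [← AddSubgroup.index_ker, AddSubgroup.card_mul_index]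
    simp
  set N := Nat.card φ.range
  have hentry (p : ι × κ) : (q : ℤ) ∣ N * M p.1 p.2 := by
    have hN : N • (⟨φ (Pi.single p.1 1), ⟨_, rfl⟩⟩ : φ.range) = 0 := card_nsmul_eq_zero'
    rw [← ZMod.intCast_zmod_eq_zero_iff_dvd]
    simpa [φ] using congrFun (congrArg Subtype.val hN) p.2
  have hdvd : q ∣ N * g := by
    have hcontent : (q : ℤ) ∣ N * Finset.univ.gcd fun p : ι × κ => M p.1 p.2 := by
      have h := Finset.dvd_gcd fun p (_ : p ∈ Finset.univ) => hentry p
      rwa [Finset.gcd_mul_left, Int.normalize_of_nonneg N.cast_nonneg] at h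
    have h := Int.dvd_gcd (Dvd.intro_left (N : ℤ) rfl) hcontent
    rwa [Int.gcd_mul_left, Int.natAbs_natCast] at h
  have hg : 0 < g := Int.gcd_pos_of_ne_zero_left _ (by exact_mod_cast NeZero.ne q)
  calc q * Nat.card φ.ker
      ≤ N * g * Nat.card φ.ker :=
        Nat.mul_le_mul_right _ (Nat.le_of_dvd (Nat.mul_pos Nat.card_pos hg) hdvd)
    _ = g * q ^ Fintype.card ι := by rw [← hcard]; ring

theorem pow_mul_card_mul_mul_eq_zero_le {ι ι' κ : Type*} [Fintype ι] [Fintype ι'] [Fintype κ]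
    [DecidableEq κ] (q : ℕ) [NeZero q] (A : Matrix κ κ ℤ) (M : Matrix ι ι' ℤ) :
    q ^ Fintype.card κ * Nat.card {H : Matrix κ ι (ZMod q) //
        A.map ((↑) : ℤ → ZMod q) * H * M.map ((↑) : ℤ → ZMod q) = 0} ≤
      (Int.gcd q (Finset.univ.gcd fun p : ι × ι' => (A.det • M) p.1 p.2) *
        q ^ Fintype.card ι) ^ Fintype.card κ := by
  have hmap : (A.map ((↑) : ℤ → ZMod q)).det • M.map ((↑) : ℤ → ZMod q) =
      (A.det • M).map (↑) := by
    rw [← Int.cast_det]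
    ext
    simp
  have hker := card_mul_mul_eq_zero_le (A.map ((↑) : ℤ → ZMod q)) (M.map ((↑) : ℤ → ZMod q))
  rw [hmap] at hker
  grw [hker, ← mul_pow, mul_card_vecMul_eq_zero_le]

theorem gcd_smul_upperMat_add_transpose_dvd {m : ℕ} (D q : ℤ) {a : Idx m → ℤ}
    (ha : Int.gcd q (Finset.univ.gcd a) = 1) :
    (Int.gcd q (Finset.univ.gcd fun p : Fin m × Fin m =>
      (D • (upperMat a + (upperMat a)ᵀ)) p.1 p.2) : ℤ) ∣ 2 * D := by
  set g := Int.gcd q _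
  have hentry (p : Idx m) : (g : ℤ) ∣ 2 * D * a p :=
    calc (g : ℤ) ∣ D * (upperMat a + (upperMat a)ᵀ) p.1.1 p.1.2 :=
          (Int.gcd_dvd_right _ _).trans (Finset.gcd_dvd (Finset.mem_univ p.1))
      _ ∣ D * (2 * a p) := mul_dvd_mul_left D (upperMat_add_transpose_apply_dvd a p)
      _ = 2 * D * a p := by ring
  have hcontent : (g : ℤ) ∣ 2 * D * Finset.univ.gcd a := by
    refine (Finset.dvd_gcd fun p (_ : p ∈ Finset.univ) => hentry p).trans ?_
    rw [Finset.gcd_mul_left]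
    exact mul_dvd_mul_right (normalize_dvd_iff.2 dvd_rfl) _
  have hcoprime : Int.gcd g (Finset.univ.gcd a) = 1 :=
    Nat.eq_one_of_dvd_one (ha ▸ Int.gcd_dvd_gcd_of_dvd_left _ (Int.gcd_dvd_left q _))
  exact Int.dvd_of_dvd_mul_left_of_gcd_one hcontent hcoprime

end KernelBounds

section ReductionModulus

variable {m n : ℕ}

theorem eR_intCast_div (q : ℕ) [NeZero q] (k : ℤ) :
    eR ((k : ℝ) / q) = ZMod.stdAddChar (k : ZMod q) := by
  rw [ZMod.stdAddChar_coe, eR]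
  push_cast
  ring_nf

theorem quadZ_eq_mul_apply (A : Matrix (Fin n) (Fin n) ℤ) (z : Fin m → Fin n → ℤ) (i j : Fin m) :
    quadZ A z i j = (Matrix.of z * A * (Matrix.of z)ᵀ) i j := by
  simp only [quadZ, Matrix.mul_apply, Matrix.of_apply, Matrix.transpose_apply, Finset.sum_mul]
  exact Finset.sum_comm

theorem sum_mul_quadZ_sub_bvec (A : Matrix (Fin n) (Fin n) ℤ) (B : Matrix (Fin m) (Fin m) ℤ)
    (a : Idx m → ℤ) (z : Fin m → Fin n → ℤ) :
    ∑ p : Idx m, a p * (quadZ A z p.1.1 p.1.2 - bvec B p) =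
      repPhase A B (upperMat a) (Matrix.of fun s i => z i s) := by
  simp only [quadZ_eq_mul_apply, repPhase, ← sum_mul_eq_trace_upperMat, Matrix.sub_apply, bvec]
  rfl

theorem eR_sum_mul_quadZ_div (A : Matrix (Fin n) (Fin n) ℤ) (B : Matrix (Fin m) (Fin m) ℤ)
    (q : ℕ) [NeZero q] (a : Idx m → ℤ) (z : Fin m → Fin n → ℤ) :
    eR ((∑ p : Idx m, (a p : ℝ) * ((quadZ A z p.1.1 p.1.2 - bvec B p : ℤ) : ℝ)) / q) =
      ZMod.stdAddChar (repPhase (A.map (↑)) (B.map (↑)) (upperMat fun p => (a p : ZMod q))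
        (Matrix.of fun s i => (z i s : ZMod q))) := by
  rw [← upperMat_map a Int.cast_zero]
  calc eR ((∑ p : Idx m, (a p : ℝ) * ((quadZ A z p.1.1 p.1.2 - bvec B p : ℤ) : ℝ)) / q)
      = ZMod.stdAddChar (Int.castRingHom (ZMod q)
          (repPhase A B (upperMat a) (Matrix.of fun s i => z i s))) := by
        rw [← sum_mul_quadZ_sub_bvec, eq_intCast, ← eR_intCast_div]
        push_cast
        rfl
    _ = _ := by rw [map_repPhase]; rfl

theorem Saq_eq_repGaussSum (A : Matrix (Fin n) (Fin n) ℤ) (B : Matrix (Fin m) (Fin m) ℤ)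
    (q : ℕ) [NeZero q] (a : Idx m → ℤ) :
    Saq A q a (bvec B) = repGaussSum ZMod.stdAddChar (A.map (↑)) (B.map (↑))
      (upperMat fun p => (a p : ZMod q)) := by
  simp_rw [Saq, Int.cast_natCast, eR_sum_mul_quadZ_div]
  exact sum_Icc_comp_intCast_matrix q fun X => ZMod.stdAddChar (repPhase _ _ _ X)

theorem sum_mapMatrix_castHom {ι κ M : Type*} [Fintype ι] [Fintype κ] [DecidableEq ι]
    [DecidableEq κ] [AddCommMonoid M] (g d : ℕ) [NeZero g] [NeZero d]
    (F : Matrix κ ι (ZMod d) → M) :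
    ∑ X : Matrix κ ι (ZMod (g * d)), F (X.map (ZMod.castHom (dvd_mul_left d g) (ZMod d))) =
      g ^ (Fintype.card ι * Fintype.card κ) • ∑ X, F X := by
  let f : Matrix κ ι (ZMod (g * d)) →+ Matrix κ ι (ZMod d) :=
    (ZMod.castHom (dvd_mul_left d g) (ZMod d)).toAddMonoidHom.mapMatrix
  have hf : Function.Surjective f := fun Y => by
    choose X hX using fun s i => ZMod.castHom_surjective (dvd_mul_left d g) (Y s i)
    exact ⟨Matrix.of X, Matrix.ext hX⟩
  have hcard : Nat.card f.ker * d ^ (Fintype.card ι * Fintype.card κ) =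
      (g * d) ^ (Fintype.card ι * Fintype.card κ) := by
    have h := f.ker.card_mul_index
    rw [AddSubgroup.index_ker, AddMonoidHom.range_eq_top.2 hf] at h
    rw [Nat.card_congr AddSubgroup.topEquiv.toEquiv] at h
    simpa [Matrix, ← pow_mul] using h
  have hker : Nat.card f.ker = g ^ (Fintype.card ι * Fintype.card κ) := by
    rw [mul_pow] at hcard
    exact Nat.eq_of_mul_eq_mul_right (pow_pos (NeZero.pos d) _) hcard
  rw [← hker]
  exact sum_comp_eq_card_ker_nsmul f hf F

theorem Saq_mul_left (A : Matrix (Fin n) (Fin n) ℤ) (B : Matrix (Fin m) (Fin m) ℤ) (g d : ℕ)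
    [NeZero g] [NeZero d] (a : Idx m → ℤ) :
    Saq A (g * d : ℕ) (fun p => g * a p) (bvec B) = (g : ℂ) ^ (m * n) * Saq A d a (bvec B) := by
  have hg : (g : ℝ) ≠ 0 := NeZero.ne _
  have hscale (x : Idx m → ℝ) : (∑ p, ((g * a p : ℤ) : ℝ) * x p) / ((g * d : ℕ) : ℤ) =
      (∑ p, (a p : ℝ) * x p) / d := by
    push_cast
    simp_rw [mul_assoc, ← Finset.mul_sum]
    rw [mul_div_mul_left _ _ hg]
  let F (X : Matrix (Fin n) (Fin m) (ZMod d)) : ℂ := ZMod.stdAddChar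
    (repPhase (A.map (↑)) (B.map (↑)) (upperMat fun p => (a p : ZMod d)) X)
  calc Saq A (g * d : ℕ) (fun p => g * a p) (bvec B)
      = ∑ X : Matrix (Fin n) (Fin m) (ZMod (g * d)),
          F (X.map (ZMod.castHom (dvd_mul_left d g) (ZMod d))) := by
        rw [← sum_Icc_comp_intCast_matrix]
        refine Finset.sum_congr rfl fun z _ => ?_
        rw [hscale, eR_sum_mul_quadZ_div]
        exact congrArg F (Matrix.ext fun s i =>
          (map_intCast (ZMod.castHom (dvd_mul_left d g) (ZMod d)) (z i s)).symm)
    _ = (g : ℂ) ^ (m * n) * Saq A d a (bvec B) := by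
        rw [sum_mapMatrix_castHom, Saq_eq_repGaussSum, repGaussSum, nsmul_eq_mul, Fintype.card_fin,
          Fintype.card_fin, Nat.cast_pow]

end ReductionModulus

section LocalDensities

variable {m n : ℕ}

/-- The normalized number of solutions `q^{-(mn-R)} #{X mod q : XᵀAX ≡ B}`, `R = m(m+1)/2`. The
exponent is an integer since `mn - R` may be negative; the local density `α_p` is the value at all
large powers of `p`. -/
def densityMod (m n : ℕ) (A : Matrix (Fin n) (Fin n) ℤ) (B : Matrix (Fin m) (Fin m) ℤ)
    (q : ℕ) : ℝ :=
  (q : ℝ) ^ (-((m : ℤ) * n - m * (m + 1) / 2)) * locCount m n A B q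

theorem densityMod_pow (A : Matrix (Fin n) (Fin n) ℤ) (B : Matrix (Fin m) (Fin m) ℤ) (p t : ℕ) :
    densityMod m n A B (p ^ t) =
      (p : ℝ) ^ (-(t : ℤ) * ((m : ℤ) * n - m * (m + 1) / 2)) * locCount m n A B (p ^ t) := by
  rw [densityMod, Nat.cast_pow, ← zpow_natCast, ← _root_.zpow_mul, mul_neg, neg_mul]

theorem card_idx (m : ℕ) : Fintype.card (Idx m) = m * (m + 1) / 2 := by
  rw [Fintype.card_congr (Sym2.sortEquiv (α := Fin m)).symm, Sym2.card, Fintype.card_fin,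
    Nat.choose_two_right, Nat.add_sub_cancel, mul_comm]

theorem densityMod_eq {A : Matrix (Fin n) (Fin n) ℤ} {B : Matrix (Fin m) (Fin m) ℤ} {q : ℕ}
    (hq : q ≠ 0) :
    densityMod m n A B q =
      ((q : ℝ) ^ (m * n))⁻¹ * ((q : ℝ) ^ Fintype.card (Idx m) * locCount m n A B q) := by
  have hexp : -((m : ℤ) * n - m * (m + 1) / 2) = -((m * n : ℕ) : ℤ) + Fintype.card (Idx m) := by
    rw [card_idx]
    push_cast
    ring
  rw [densityMod, hexp, zpow_add₀ (Nat.cast_ne_zero.2 hq), _root_.zpow_neg, zpow_natCast,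
    zpow_natCast, mul_assoc]

theorem sum_Saq_eq_mul_locCount {A : Matrix (Fin n) (Fin n) ℤ} (hA : A.IsSymm)
    {B : Matrix (Fin m) (Fin m) ℤ} (hB : B.IsSymm) (q : ℕ) [NeZero q] :
    ∑ a ∈ Finset.Icc (fun _ : Idx m => (0 : ℤ)) (fun _ => (q : ℤ) - 1), Saq A q a (bvec B) =
      (q : ℂ) ^ Fintype.card (Idx m) * locCount m n A B q := by
  simp_rw [Saq_eq_repGaussSum]
  rw [sum_Icc_comp_intCast q fun a : Idx m → ZMod q =>
      repGaussSum ZMod.stdAddChar (A.map (↑)) (B.map (↑)) (upperMat a),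
    sum_repGaussSum_upperMat (ZMod.isPrimitive_stdAddChar q) (hA.map _) (hB.map _), ZMod.card]
  rfl

theorem sum_divisors_STerm {A : Matrix (Fin n) (Fin n) ℤ} (hA : A.IsSymm)
    {B : Matrix (Fin m) (Fin m) ℤ} (hB : B.IsSymm) {q : ℕ} (hq : q ≠ 0) :
    ∑ d ∈ q.divisors, STerm A B d = (densityMod m n A B q : ℂ) := by
  have : NeZero q := ⟨hq⟩
  rw [densityMod_eq hq]
  push_cast
  rw [← sum_Saq_eq_mul_locCount hA hB q, sum_Icc_eq_sum_divisors hq, Finset.mul_sum]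
  refine Finset.sum_congr rfl fun d hd => ?_
  have hqd : q / d * d = q := Nat.div_mul_cancel (Nat.dvd_of_mem_divisors hd)
  have : NeZero (q / d) := ⟨left_ne_zero_of_mul (hqd.trans_ne hq)⟩
  have : NeZero d := ⟨right_ne_zero_of_mul (hqd.trans_ne hq)⟩
  have hgpow : (((q / d : ℕ) : ℂ)) ^ (m * n) ≠ 0 := pow_ne_zero _ (NeZero.ne _)
  have hterm (a : Idx m → ℤ) : Saq A q (fun p => ((q / d : ℕ) : ℤ) * a p) (bvec B) =
      ((q / d : ℕ) : ℂ) ^ (m * n) * Saq A d a (bvec B) := by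
    rw [← Saq_mul_left, hqd]
  have hqpow : (q : ℂ) ^ (m * n) = ((q / d : ℕ) : ℂ) ^ (m * n) * (d : ℂ) ^ (m * n) := by
    rw [← mul_pow, ← Nat.cast_mul, hqd]
  simp_rw [hterm, ← Finset.mul_sum, hqpow, STerm, resid]
  field_simp

theorem card_quadratic_eq_mul {ι κ R S T : Type*} [Fintype κ] [CommRing R] [CommRing S]
    [CommRing T] (f : R →+* S) (g : R →+* T) (hfg : Function.Bijective fun x => (f x, g x))
    (A : Matrix κ κ R) (B : Matrix ι ι R) :
    Nat.card {X : Matrix κ ι R // Xᵀ * A * X = B} =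
      Nat.card {X : Matrix κ ι S // Xᵀ * A.map f * X = B.map f} *
        Nat.card {X : Matrix κ ι T // Xᵀ * A.map g * X = B.map g} := by
  let e : Matrix κ ι R ≃ Matrix κ ι S × Matrix κ ι T :=
    { toFun X := (X.map f, X.map g)
      invFun P := Matrix.of fun s i => (Equiv.ofBijective _ hfg).symm (P.1 s i, P.2 s i)
      left_inv X := Matrix.ext fun s i => (Equiv.ofBijective _ hfg).symm_apply_apply (X s i)
      right_inv P :=
        have h s i := (Equiv.ofBijective _ hfg).apply_symm_apply (P.1 s i, P.2 s i)
        Prod.ext (Matrix.ext fun s i => congrArg Prod.fst (h s i))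
          (Matrix.ext fun s i => congrArg Prod.snd (h s i)) }
  have heq (M N : Matrix ι ι R) : M = N ↔ M.map f = N.map f ∧ M.map g = N.map g := by
    refine ⟨fun h => by simp [h], fun h => Matrix.ext fun i j => hfg.injective ?_⟩
    exact Prod.ext (congrFun (congrFun h.1 i) j) (congrFun (congrFun h.2 i) j)
  rw [← Nat.card_prod]
  refine Nat.card_congr ((e.subtypeEquiv fun X => ?_).trans (Equiv.subtypeProdEquivProd
    (p := fun X => Xᵀ * A.map f * X = B.map f) (q := fun X => Xᵀ * A.map g * X = B.map g)))
  simp only [heq, Matrix.map_mul, Matrix.transpose_map, e, Equiv.coe_fn_mk]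

theorem locCount_mul (A : Matrix (Fin n) (Fin n) ℤ) (B : Matrix (Fin m) (Fin m) ℤ) {q r : ℕ}
    (h : q.Coprime r) :
    locCount m n A B (q * r) = locCount m n A B q * locCount m n A B r := by
  have hcast {k l s : ℕ} (M : Matrix (Fin k) (Fin l) ℤ) (π : ZMod (q * r) →+* ZMod s) :
      (M.map ((↑) : ℤ → ZMod (q * r))).map π = M.map ((↑) : ℤ → ZMod s) := by
    ext
    simp
  have hcrt := card_quadratic_eq_mul
    ((RingHom.fst _ _).comp (ZMod.chineseRemainder h).toRingHom)
    ((RingHom.snd _ _).comp (ZMod.chineseRemainder h).toRingHom)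
    (ZMod.chineseRemainder h).bijective (A.map (↑)) (B.map (↑))
  rwa [hcast, hcast, hcast, hcast] at hcrt

theorem densityMod_mul (A : Matrix (Fin n) (Fin n) ℤ) (B : Matrix (Fin m) (Fin m) ℤ) {q r : ℕ}
    (h : q.Coprime r) :
    densityMod m n A B (q * r) = densityMod m n A B q * densityMod m n A B r := by
  simp only [densityMod, locCount_mul A B h, Nat.cast_mul, mul_zpow]
  ring

theorem densityMod_one (A : Matrix (Fin n) (Fin n) ℤ) (B : Matrix (Fin m) (Fin m) ℤ) :
    densityMod m n A B 1 = 1 := by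
  have : Unique {X : Matrix (Fin n) (Fin m) (ZMod 1) |
      Xᵀ * A.map ((↑) : ℤ → ZMod 1) * X = B.map ((↑) : ℤ → ZMod 1)} :=
    ⟨⟨⟨0, Subsingleton.elim _ _⟩⟩, fun _ => Subsingleton.elim _ _⟩
  rw [densityMod, locCount, Nat.card_unique]
  simp

end LocalDensities

section Multiplicativity

open ArithmeticFunction in
theorem isMultiplicative_of_isMultiplicative_mul_zeta {R : Type*} [CommRing R]
    {f : ArithmeticFunction R} (h : (f * (zeta : ArithmeticFunction R)).IsMultiplicative) :
    f.IsMultiplicative := by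
  have hf : f = f * (zeta : ArithmeticFunction R) * (moebius : ArithmeticFunction R) := by
    rw [mul_assoc, coe_zeta_mul_coe_moebius, mul_one]
  rw [hf]
  exact h.mul isMultiplicative_moebius.intCast

variable {m n : ℕ} {A : Matrix (Fin n) (Fin n) ℤ} {B : Matrix (Fin m) (Fin m) ℤ}

theorem STerm_zero (A : Matrix (Fin n) (Fin n) ℤ) (B : Matrix (Fin m) (Fin m) ℤ) :
    STerm A B 0 = 0 := by
  have hresid : resid m (0 : ℕ) = ∅ := by
    cases isEmpty_or_nonempty (Idx m)
    · simp [resid]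
    · rw [resid, Finset.Icc_eq_empty, Finset.filter_empty]
      exact fun h => by simpa using h (Classical.arbitrary (Idx m))
  rw [STerm, hresid, Finset.sum_empty, mul_zero]

/-- The terms of the singular series as an arithmetic function; multiplicativity and Dirichlet
convolution apply to it. -/
def singularTerms (A : Matrix (Fin n) (Fin n) ℤ) (B : Matrix (Fin m) (Fin m) ℤ) :
    ArithmeticFunction ℂ :=
  ⟨STerm A B, STerm_zero A B⟩

theorem singularTerms_mul_zeta_apply (hA : A.IsSymm) (hB : B.IsSymm) {q : ℕ} (hq : q ≠ 0) :
    (singularTerms A B * ArithmeticFunction.zeta) q = densityMod m n A B q := by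
  rw [ArithmeticFunction.coe_mul_zeta_apply]
  exact sum_divisors_STerm hA hB hq

theorem isMultiplicative_singularTerms (hA : A.IsSymm) (hB : B.IsSymm) :
    (singularTerms A B).IsMultiplicative := by
  apply isMultiplicative_of_isMultiplicative_mul_zeta
  rw [ArithmeticFunction.IsMultiplicative.iff_ne_zero]
  refine ⟨?_, fun hq hr hqr => ?_⟩
  · rw [singularTerms_mul_zeta_apply hA hB one_ne_zero, densityMod_one, Complex.ofReal_one]
  · rw [singularTerms_mul_zeta_apply hA hB hq, singularTerms_mul_zeta_apply hA hB hr,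
      singularTerms_mul_zeta_apply hA hB (mul_ne_zero hq hr), densityMod_mul A B hqr,
      Complex.ofReal_mul]

end Multiplicativity

section Convergence

variable {m n : ℕ} {A : Matrix (Fin n) (Fin n) ℤ}

theorem pow_mul_card_mul_upperMat_add_transpose_eq_zero_le (hdet : A.det ≠ 0) (q : ℕ) [NeZero q]
    {a : Idx m → ℤ} (ha : Int.gcd q (Finset.univ.gcd a) = 1) :
    q ^ n * Nat.card {H : Matrix (Fin n) (Fin m) (ZMod q) // A.map ((↑) : ℤ → ZMod q) * H *
        ((upperMat fun p => (a p : ZMod q)) + (upperMat fun p => (a p : ZMod q))ᵀ) = 0} ≤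
      (2 * A.det.natAbs * q ^ m) ^ n := by
  have hmap : (upperMat fun p => (a p : ZMod q)) + (upperMat fun p => (a p : ZMod q))ᵀ =
      (upperMat a + (upperMat a)ᵀ).map (↑) := by
    rw [← upperMat_map a Int.cast_zero]
    ext
    simp
  have hgcd : Int.gcd q (Finset.univ.gcd fun p : Fin m × Fin m =>
      (A.det • (upperMat a + (upperMat a)ᵀ)) p.1 p.2) ≤ 2 * A.det.natAbs := by
    have h := Int.natAbs_dvd_natAbs.2 (gcd_smul_upperMat_add_transpose_dvd A.det q ha)
    rw [Int.natAbs_natCast, Int.natAbs_mul] at h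
    exact Nat.le_of_dvd (Nat.mul_pos two_pos (Int.natAbs_pos.2 hdet)) h
  have hker := pow_mul_card_mul_mul_eq_zero_le q A (upperMat a + (upperMat a)ᵀ)
  rw [Fintype.card_fin, Fintype.card_fin] at hker
  grw [hmap, hker, hgcd]

theorem norm_Saq_le (hA : A.IsSymm) (hdet : A.det ≠ 0) (B : Matrix (Fin m) (Fin m) ℤ) (q : ℕ)
    [NeZero q] {a : Idx m → ℤ} (ha : Int.gcd q (Finset.univ.gcd a) = 1) :
    ‖Saq A q a (bvec B)‖ ≤ (2 * A.det.natAbs / q : ℝ) ^ (n / 2 : ℝ) * (q : ℝ) ^ (m * n) := by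
  have hq : (0 : ℝ) < q := Nat.cast_pos.2 (NeZero.pos q)
  have hweyl := norm_repGaussSum_sq_le (ZMod.isPrimitive_stdAddChar q) (hA.map ((↑) : ℤ → ZMod q))
    (B.map (↑)) (upperMat fun p => (a p : ZMod q))
  rw [← Saq_eq_repGaussSum] at hweyl
  have hkernel := pow_mul_card_mul_upperMat_add_transpose_eq_zero_le hdet q ha
  have hcard : Fintype.card (Matrix (Fin n) (Fin m) (ZMod q)) = q ^ (m * n) := by
    rw [← Nat.card_eq_fintype_card]
    simp [Matrix, pow_mul]
  rw [hcard, Nat.cast_pow] at hweyl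
  generalize Nat.card _ = N at hweyl hkernel
  have hN : (q : ℝ) ^ n * N ≤ (2 * A.det.natAbs * q ^ m) ^ n := mod_cast hkernel
  refine le_of_sq_le_sq ?_ (by positivity)
  rw [mul_pow, ← Real.rpow_mul_natCast (by positivity), Nat.cast_ofNat,
    div_mul_cancel₀ _ two_ne_zero, Real.rpow_natCast, div_pow, div_mul_eq_mul_div,
    le_div_iff₀ (by positivity)]
  calc ‖Saq A q a (bvec B)‖ ^ 2 * (q : ℝ) ^ n
      ≤ (q : ℝ) ^ (m * n) * N * (q : ℝ) ^ n := by gcongr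
    _ = (q : ℝ) ^ (m * n) * ((q : ℝ) ^ n * N) := by ring
    _ ≤ (q : ℝ) ^ (m * n) * (2 * A.det.natAbs * q ^ m) ^ n := by gcongr
    _ = (2 * A.det.natAbs : ℝ) ^ n * ((q : ℝ) ^ (m * n)) ^ 2 := by ring

theorem card_resid_le (m q : ℕ) : (resid m q).card ≤ q ^ Fintype.card (Idx m) := by
  refine (Finset.card_filter_le _ _).trans ?_
  simp [Pi.card_Icc]

theorem norm_STerm_le (hA : A.IsSymm) (hdet : A.det ≠ 0) (B : Matrix (Fin m) (Fin m) ℤ) (q : ℕ) :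
    ‖STerm A B q‖ ≤ (2 * A.det.natAbs : ℝ) ^ (n / 2 : ℝ) *
      (q : ℝ) ^ (Fintype.card (Idx m) - n / 2 : ℝ) := by
  obtain rfl | hq := eq_or_ne q 0
  · rw [STerm_zero, norm_zero]
    positivity
  have : NeZero q := ⟨hq⟩
  have hq0 : (0 : ℝ) < q := Nat.cast_pos.2 (NeZero.pos q)
  have hsum : ‖∑ a ∈ resid m q, Saq A q a (bvec B)‖ ≤ (q : ℝ) ^ Fintype.card (Idx m) *
      ((2 * A.det.natAbs / q : ℝ) ^ (n / 2 : ℝ) * (q : ℝ) ^ (m * n)) := by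
    refine (norm_sum_le_of_le _ fun a ha =>
      norm_Saq_le hA hdet B q (Finset.mem_filter.1 ha).2).trans ?_
    rw [Finset.sum_const, nsmul_eq_mul]
    gcongr
    exact_mod_cast card_resid_le m q
  calc ‖STerm A B q‖
      = ((q : ℝ) ^ (m * n))⁻¹ * ‖∑ a ∈ resid m q, Saq A q a (bvec B)‖ := by
        rw [STerm, norm_mul, norm_inv, norm_pow, Complex.norm_natCast]
    _ ≤ ((q : ℝ) ^ (m * n))⁻¹ * ((q : ℝ) ^ Fintype.card (Idx m) *
          ((2 * A.det.natAbs / q : ℝ) ^ (n / 2 : ℝ) * (q : ℝ) ^ (m * n))) := by gcongr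
    _ = (q : ℝ) ^ Fintype.card (Idx m) * (2 * A.det.natAbs / q : ℝ) ^ (n / 2 : ℝ) := by
        have hqpow : (q : ℝ) ^ (m * n) ≠ 0 := by positivity
        rw [mul_comm, ← mul_assoc, mul_inv_cancel_right₀ hqpow]
    _ = _ := by
        rw [Real.rpow_sub hq0, Real.div_rpow (by positivity) hq0.le, Real.rpow_natCast]
        ring

theorem summable_norm_STerm (hA : A.IsSymm) (hdet : A.det ≠ 0) (B : Matrix (Fin m) (Fin m) ℤ)
    (hmn : m * (m + 1) + 2 < n) : Summable fun q => ‖STerm A B q‖ := by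
  refine .of_nonneg_of_le (fun _ => norm_nonneg _) (norm_STerm_le hA hdet B)
    ((Real.summable_nat_rpow.2 ?_).mul_left _)
  have hR : 2 * Fintype.card (Idx m) + 2 < n := by
    rwa [card_idx, Nat.mul_div_cancel' (Nat.even_mul_succ_self m).two_dvd]
  have hR' : 2 * (Fintype.card (Idx m) : ℝ) + 2 < n := mod_cast hR
  linarith

end Convergence

section Parameters

theorem det_ne_zero_of_posDef_map {n : ℕ} {A : Matrix (Fin n) (Fin n) ℤ}
    (hA : (A.map ((↑) : ℤ → ℝ)).PosDef) : A.det ≠ 0 := by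
  have hpos := hA.det_pos
  rw [← Int.cast_det, Int.cast_pos] at hpos
  exact hpos.ne'

variable {m : ℕ} [NeZero m] {B : Matrix (Fin m) (Fin m) ℤ}

theorem natCast_le_gamT (hmono : ∀ i j : Fin m, i ≤ j → B i i ≤ B j j) (hB : 2 ≤ B 0 0) :
    (m : ℝ) ≤ gamT B := by
  have hterm (i : Fin m) : 1 ≤ (gamI B i)⁻¹ := by
    have h2 : (2 : ℝ) ≤ B 0 0 := mod_cast hB
    have hi : (B 0 0 : ℝ) ≤ B i i := mod_cast hmono 0 i (Fin.zero_le i)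
    rw [gamI, inv_div, one_le_div (Real.log_pos (by linarith))]
    exact Real.log_le_log (by linarith) hi
  calc (m : ℝ) = ∑ _i : Fin m, (1 : ℝ) := by simp
    _ ≤ gamT B := Finset.sum_le_sum fun i _ => hterm i

theorem mul_add_two_lt_of_lt_gamT {n : ℕ} (hγ : (m : ℝ) ≤ gamT B)
    (hn : (2 * gamT B + (m : ℝ) * (m - 1)) * ((m : ℝ) * (m + 1) / 2 + 1) < n) :
    m * (m + 1) + 2 < n := by
  have hm : (1 : ℝ) ≤ m := mod_cast NeZero.one_le
  have hm' : (2 : ℝ) ≤ m * (m + 1) := by nlinarith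
  have h : (m : ℝ) * (m + 1) + 2 < n := by
    refine lt_of_le_of_lt ?_ hn
    calc (m : ℝ) * (m + 1) + 2 ≤ m * (m + 1) * (m * (m + 1) / 2 + 1) := by nlinarith
      _ ≤ (2 * gamT B + m * (m - 1)) * (m * (m + 1) / 2 + 1) := by gcongr; linarith
  exact_mod_cast h

end Parameters

section EulerProduct

variable {m n : ℕ} {A : Matrix (Fin n) (Fin n) ℤ} {B : Matrix (Fin m) (Fin m) ℤ}

theorem tendsto_densityMod_prime_pow (hA : A.IsSymm) (hB : B.IsSymm)
    (hsum : Summable fun q => ‖STerm A B q‖) {p : ℕ} (hp : p.Prime) :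
    Tendsto (fun t => (densityMod m n A B (p ^ t) : ℂ)) atTop
      (nhds (∑' t, STerm A B (p ^ t))) := by
  have hlim := (hsum.of_norm.comp_injective (Nat.pow_right_injective hp.two_le)).hasSum
    |>.tendsto_sum_nat.comp (tendsto_add_atTop_nat 1)
  refine hlim.congr fun t => ?_
  rw [← sum_divisors_STerm hA hB (pow_ne_zero t hp.ne_zero), Nat.sum_divisors_prime_pow hp]
  rfl

theorem stmt14_general (hA : A.IsSymm) (hdet : A.det ≠ 0) (hB : B.IsSymm)
    (hmn : m * (m + 1) + 2 < n) {α : Nat.Primes → ℝ}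
    (hα : ∀ p : Nat.Primes, Tendsto (fun t => densityMod m n A B (p ^ t)) atTop (nhds (α p))) :
    HasProd (fun p => (α p : ℂ)) (Sing A B) := by
  have hsum := summable_norm_STerm hA hdet B hmn
  have hmul := isMultiplicative_singularTerms hA hB
  have hlocal (p : Nat.Primes) : ∑' t, STerm A B (p ^ t) = α p :=
    tendsto_nhds_unique (tendsto_densityMod_prime_pow hA hB hsum p.2)
      ((Complex.continuous_ofReal.tendsto _).comp (hα p))
  simp_rw [← hlocal]
  exact EulerProduct.eulerProduct_hasProd hmul.map_one hmul.map_mul_of_coprime hsum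
    (STerm_zero A B)

end EulerProduct

/-- Lemma 6.1, factorization of the singular series. -/
theorem stmt14 (m n : ℕ) [NeZero m] [NeZero n]
    (A : Matrix (Fin n) (Fin n) ℤ) (hAs : A.IsSymm)
    (hApd : (A.map ((↑) : ℤ → ℝ)).PosDef)
    (B : Matrix (Fin m) (Fin m) ℤ) (hBs : B.IsSymm)
    (hBpd : (B.map ((↑) : ℤ → ℝ)).PosDef)
    (hBmono : ∀ i j : Fin m, i ≤ j → B i i ≤ B j j)
    (hBoff : ∀ i j : Fin m, i < j → |B i j| ≤ B i i)
    (hB11 : 2 ≤ B 0 0)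
    (hn : (n : ℝ) > (2 * gamT B + (m : ℝ) * ((m : ℝ) - 1)) *
      ((m : ℝ) * ((m : ℝ) + 1) / 2 + 1)) :
    ∀ αp : Nat.Primes → ℝ,
      (∀ p : Nat.Primes, ∀ᶠ t : ℕ in Filter.atTop,
        αp p = ((p : ℕ) : ℝ) ^ (-(t : ℤ) * ((m : ℤ) * (n : ℤ) - (m : ℤ) * ((m : ℤ) + 1) / 2)) *
          (locCount m n A B ((p : ℕ) ^ t) : ℝ)) →
      Sing A B = ∏' p : Nat.Primes, ((αp p : ℝ) : ℂ) := by
  intro αp hαp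
  refine (stmt14_general hAs (det_ne_zero_of_posDef_map hApd) hBs
    (mul_add_two_lt_of_lt_gamT (natCast_le_gamT hBmono hB11) hn) fun p => ?_).tprod_eq.symm
  simp_rw [← densityMod_pow] at hαp
  exact tendsto_const_nhds.congr' (hαp p)
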